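/- There exists a universal constant C ∈ (0,∞) such that for every Hilbert space H and every n ∈ ℕ, every smooth compactly supported function f:ℝ^n→H satisfies (∫_{ℝ^n} ∫_0^∞ fint_{x+tB^n} ‖f(y) − Taylor¹_x(H_{t²/n}f)(y)‖_H² dy dt/t³ dx)^{1/2} ≤ C·(fint_{S^{n−1}} ‖σ·∇f‖_{L_2(ℝ^n;H)}² dσ)^{1/2}. -/

import Mathlib

open MeasureTheory Metric Set ENNReal

noncomputable section

universe u

/-- The heat kernel `h_t(x) = (4πt)^{-n/2} e^{-|x|²/(4t)}` on `ℝⁿ`. -/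
def heatKernel (n : ℕ) (t : ℝ) (x : EuclideanSpace ℝ (Fin n)) : ℝ :=
  (4 * Real.pi * t) ^ (-(n : ℝ) / 2) * Real.exp (-‖x‖ ^ 2 / (4 * t))

/-- The heat evolute `H_t f = h_t ∗ f`. -/
def heat {n : ℕ} {Y : Type*} [NormedAddCommGroup Y] [NormedSpace ℝ Y]
    (t : ℝ) (f : EuclideanSpace ℝ (Fin n) → Y) (x : EuclideanSpace ℝ (Fin n)) : Y :=
  ∫ z, heatKernel n t z • f (x - z)

/-- The first-order Taylor polynomial `Taylor¹_x(g)(y) = g(x) + (y-x)·∇g(x)`. -/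
def taylor1 {n : ℕ} {Y : Type*} [NormedAddCommGroup Y] [NormedSpace ℝ Y]
    (g : EuclideanSpace ℝ (Fin n) → Y) (x y : EuclideanSpace ℝ (Fin n)) : Y :=
  g x + ∑ j, (y - x) j • fderiv ℝ g x (EuclideanSpace.single j 1)

/-- The directional derivative `(z·∇)f = Σ_j z_j ∂_j f`. -/
def dirDeriv {n : ℕ} {Y : Type*} [NormedAddCommGroup Y] [NormedSpace ℝ Y]
    (z : EuclideanSpace ℝ (Fin n)) (f : EuclideanSpace ℝ (Fin n) → Y)
    (y : EuclideanSpace ℝ (Fin n)) : Y :=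
  ∑ j, z j • fderiv ℝ f y (EuclideanSpace.single j 1)

section rep
open SchwartzMap FourierTransform Complex
open scoped Real LineDeriv SchwartzMap

lemma iteratedDeriv_cexp_aux (c : ℂ) (k : ℕ) :
    iteratedDeriv k (fun u : ℝ => cexp (c * u)) = fun u : ℝ => c ^ k * cexp (c * u) := by
  induction k with
  | zero => simp
  | succ k ih =>
    rw [iteratedDeriv_succ, ih]
    ext u
    have h1 : HasDerivAt (fun u : ℝ => cexp (c * u)) (cexp (c * u) * (c * 1)) u :=
      ((Complex.ofRealCLM.hasDerivAt (x := u)).const_mul c).cexp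
    rw [(h1.const_mul (c ^ k)).deriv]
    ring

lemma contDiff_cexp_aux (c : ℂ) : ContDiff ℝ (⊤ : ℕ∞) (fun u : ℝ => cexp (c * u)) := by
  have : ContDiff ℝ (⊤ : ℕ∞) (fun u : ℝ => c * (u : ℂ)) :=
    contDiff_const.mul Complex.ofRealCLM.contDiff
  exact this.cexp

lemma temp_exp_I : (fun u : ℝ => cexp (I * u)).HasTemperateGrowth := by
  refine ⟨contDiff_cexp_aux I, fun k => ⟨0, 1, fun x => ?_⟩⟩
  rw [norm_iteratedFDeriv_eq_norm_iteratedDeriv, iteratedDeriv_cexp_aux]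
  simp [Complex.norm_exp]

variable {n : ℕ} {E : Type*} [NormedAddCommGroup E] [InnerProductSpace ℂ E] [CompleteSpace E]

lemma temp_exp (z : EuclideanSpace ℝ (Fin n)) :
    (fun ξ : EuclideanSpace ℝ (Fin n) => cexp (2 * π * I * (inner ℝ ξ z : ℝ))).HasTemperateGrowth := by
  have h : (fun ξ : EuclideanSpace ℝ (Fin n) => 2 * π * (inner ℝ ξ z : ℝ)).HasTemperateGrowth := by
    fun_prop
  convert temp_exp_I.comp h using 1
  ext ξ
  simp only [Function.comp]
  congr 1
  push_cast
  ring

lemma temp_gauss (c : ℝ) (hc : 0 ≤ c) :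
    (fun ξ : EuclideanSpace ℝ (Fin n) => cexp (-(c : ℂ) * (‖ξ‖ : ℂ) ^ 2)).HasTemperateGrowth := by
  have h : (fun ξ : EuclideanSpace ℝ (Fin n) => ‖ξ‖ ^ 2).HasTemperateGrowth := by
    fun_prop
  have := Function.HasTemperateGrowth.comp' (g := fun u : ℝ => cexp (-(c : ℂ) * u))
    (t := Set.Ioi (-1)) (f := fun ξ : EuclideanSpace ℝ (Fin n) => ‖ξ‖ ^ 2) ?_ isOpen_Ioi.uniqueDiffOn
    (contDiff_cexp_aux _).contDiffOn ?_ h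
  · convert this using 1
    ext ξ
    simp
  · rintro _ ⟨ξ, rfl⟩
    simp only [mem_Ioi]
    have : 0 ≤ ‖ξ‖ ^ 2 := by positivity
    linarith
  · intro N
    refine ⟨0, (1 + c) ^ N * Real.exp c, by positivity, fun k hk x hx => ?_⟩
    rw [iteratedFDerivWithin_of_isOpen _ isOpen_Ioi hx, norm_iteratedFDeriv_eq_norm_iteratedDeriv,
      iteratedDeriv_cexp_aux]
    simp only [norm_mul, norm_pow, norm_neg, Complex.norm_real, Real.norm_eq_abs, abs_of_nonneg hc,
      Complex.norm_exp, pow_zero, mul_one]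
    have h1 : c ^ k ≤ (1 + c) ^ N :=
      (pow_le_pow_left₀ hc (by linarith) k).trans (pow_le_pow_right₀ (by linarith) hk)
    have h2 : (-(c : ℂ) * x).re ≤ c := by
      simp only [mul_re, neg_re, ofReal_re, neg_im, ofReal_im, mul_zero, sub_zero]
      simp only [mem_Ioi] at hx
      nlinarith
    gcongr

def gaussM (n : ℕ) (s : ℝ) (ξ : EuclideanSpace ℝ (Fin n)) : ℂ :=
  cexp (-((4 * π ^ 2 * s : ℝ) : ℂ) * (‖ξ‖ : ℂ) ^ 2)

/-- The Fourier multiplier. -/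
def mult (z : EuclideanSpace ℝ (Fin n)) (s : ℝ) (ξ : EuclideanSpace ℝ (Fin n)) : ℂ :=
  cexp (2 * π * I * (inner ℝ ξ z : ℝ)) -
    (1 + 2 * π * I * (inner ℝ ξ z : ℝ)) * gaussM n s ξ

lemma temp_gaussM (s : ℝ) (hs : 0 ≤ s) : (gaussM n s).HasTemperateGrowth :=
  temp_gauss _ (by positivity)

lemma temp_mult (z : EuclideanSpace ℝ (Fin n)) (s : ℝ) (hs : 0 ≤ s) :
    (mult z s).HasTemperateGrowth := by
  have h : (fun ξ : EuclideanSpace ℝ (Fin n) => 1 + 2 * π * I * (inner ℝ ξ z : ℝ)).HasTemperateGrowth := by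
    have h0 : (fun ξ : EuclideanSpace ℝ (Fin n) => (((inner ℝ ξ z : ℝ)) : ℂ)).HasTemperateGrowth := by
      exact Function.Complex.hasTemperateGrowth_ofReal.comp
        (f := fun ξ : EuclideanSpace ℝ (Fin n) => (inner ℝ ξ z : ℝ)) (by fun_prop)
    fun_prop
  exact (temp_exp z).sub (h.mul (temp_gaussM s hs))

lemma heat_eq (F : 𝓢(EuclideanSpace ℝ (Fin n), E)) (s : ℝ) (hs : 0 < s) :
    heat s F = (𝓕⁻ (smulLeftCLM E (gaussM n s) (𝓕 F)) : 𝓢(EuclideanSpace ℝ (Fin n), E)) := by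
  ext x
  rw [SchwartzMap.fourierInv_coe, Real.fourierInv_eq']
  have hb : 0 < (((4 * π ^ 2 * s : ℝ) : ℂ)).re := by
    rw [ofReal_re]; positivity
  have key := VectorFourier.integral_bilin_fourierIntegral_eq_flip
    (μ := (volume : Measure (EuclideanSpace ℝ (Fin n))))
    (ν := (volume : Measure (EuclideanSpace ℝ (Fin n)))) (e := Real.fourierChar)
    (L := innerₗ (EuclideanSpace ℝ (Fin n)))
    (f := fun v ↦ cexp (-((4 * π ^ 2 * s : ℝ) : ℂ) * ‖v‖ ^ 2 + 2 * π * Complex.I * (inner ℝ x v : ℝ)))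
    (g := F) (ContinuousLinearMap.lsmul ℂ ℂ) Real.continuous_fourierChar continuous_inner
    (GaussianFourier.integrable_cexp_neg_mul_sq_norm_add hb _ _) F.integrable
  have e1 : ∀ w, VectorFourier.fourierIntegral Real.fourierChar volume
      (innerₗ (EuclideanSpace ℝ (Fin n))) (fun v ↦ cexp (-((4 * π ^ 2 * s : ℝ) : ℂ) * ‖v‖ ^ 2
        + 2 * π * Complex.I * (inner ℝ x v : ℝ))) w = ((heatKernel n s (x - w) : ℝ) : ℂ) := by
    intro w
    have := fourier_gaussian_innerProductSpace' hb x w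
    refine Eq.trans ?_ (this.trans ?_)
    · rfl
    · rw [heatKernel]
      push_cast
      congr 1
      · rw [finrank_euclideanSpace_fin, Complex.ofReal_cpow (by positivity)]
        have : (π : ℂ) / (4 * π ^ 2 * s) = (((4 * π * s)⁻¹ : ℝ) : ℂ) := by
          push_cast
          have : (π : ℂ) ≠ 0 := by exact_mod_cast Real.pi_ne_zero
          have : (s : ℂ) ≠ 0 := by exact_mod_cast hs.ne'
          field_simp
        rw [this]
        have e2 : ((n : ℂ) / 2) = ((n / 2 : ℝ) : ℂ) := by push_cast; rfl
        have e3 : (((-(n:ℝ) / 2 : ℝ)) : ℂ) = ((-(n / 2) : ℝ) : ℂ) := by push_cast; ring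
        rw [e2, e3, ← Complex.ofReal_cpow (by positivity), ← Complex.ofReal_cpow (by positivity),
          Real.inv_rpow (by positivity), Real.rpow_neg (by positivity)]
      · congr 1
        have : (π : ℂ) ≠ 0 := by exact_mod_cast Real.pi_ne_zero
        have : (s : ℂ) ≠ 0 := by exact_mod_cast hs.ne'
        field_simp
  simp only [e1, ContinuousLinearMap.lsmul_apply, flip_innerₗ] at key
  have e4 : ∀ w, VectorFourier.fourierIntegral Real.fourierChar volume
      (innerₗ (EuclideanSpace ℝ (Fin n))) (⇑F) w = 𝓕 F w := fun w => rfl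
  rw [heat, ← integral_sub_left_eq_self (fun z => heatKernel n s z • F (x - z)) _ x]
  simp only [_root_.sub_sub_cancel]
  refine Eq.trans ?_ (key.trans ?_)
  · simp only [Complex.coe_smul]
  · congr 1
    ext v
    refine Eq.trans (congrArg (fun y => _ • y) (e4 v)) ?_
    rw [smulLeftCLM_apply_apply (temp_gaussM s hs.le), smul_smul, gaussM, Complex.exp_add, mul_comm,
      real_inner_comm]
    congr 3
    push_cast
    ring

lemma rep (F : 𝓢(EuclideanSpace ℝ (Fin n), E)) (s : ℝ) (hs : 0 < s)
    (x z : EuclideanSpace ℝ (Fin n)) :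
    F (x + z) - taylor1 (heat s F) x (x + z) =
      (𝓕⁻ (smulLeftCLM E (mult z s) (𝓕 F)) : 𝓢(EuclideanSpace ℝ (Fin n), E)) x := by
  set G : 𝓢(EuclideanSpace ℝ (Fin n), E) := smulLeftCLM E (gaussM n s) (𝓕 F) with hG
  have hin : (inner ℝ · z : EuclideanSpace ℝ (Fin n) → ℝ).HasTemperateGrowth := by fun_prop
  have hd : ∑ j, (x + z - x) j • fderiv ℝ (𝓕⁻ G : 𝓢(EuclideanSpace ℝ (Fin n), E)) x
      (EuclideanSpace.single j 1) =
      (𝓕⁻ ((2 * π * Complex.I) • smulLeftCLM E (inner ℝ · z) G) : 𝓢(EuclideanSpace ℝ (Fin n), E)) x := by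
    rw [← lineDerivOp_fourierInv_eq, lineDerivOp_apply_eq_fderiv, add_sub_cancel_left]
    simp_rw [← map_smul, ← map_sum]
    congr 1
    have := (EuclideanSpace.basisFun (Fin n) ℝ).sum_repr z
    simpa using this
  have hF : F (x + z) = (𝓕⁻ (𝓕 F) : 𝓢(EuclideanSpace ℝ (Fin n), E)) (x + z) := by
    simp
  rw [taylor1, heat_eq F s hs, hd, hF]
  simp only [SchwartzMap.fourierInv_coe, Real.fourierInv_eq']
  have integ : ∀ (x : EuclideanSpace ℝ (Fin n)) (K : 𝓢(EuclideanSpace ℝ (Fin n), E)),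
      Integrable (fun v => cexp (↑(2 * π * inner ℝ v x) * I) • K v) := by
    intro x K
    refine K.integrable.norm.mono' (by fun_prop) ?_
    refine Filter.Eventually.of_forall fun v => ?_
    rw [norm_smul, Complex.norm_exp_ofReal_mul_I, one_mul]
  rw [← integral_add (integ _ _) (integ _ _), ← integral_sub (integ _ _)]
  swap
  · exact (integ _ _).add (integ _ _)
  congr 1
  ext v
  rw [smulLeftCLM_apply_apply (temp_mult z s hs.le)]
  simp only [hG, smul_apply]
  rw [smulLeftCLM_apply_apply hin, smulLeftCLM_apply_apply (temp_gaussM s hs.le)]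
  rw [mult, inner_add_right]
  simp only [← Complex.coe_smul (inner ℝ v z), smul_smul, ← add_smul, ← sub_smul]
  congr 1
  rw [mul_sub, ← Complex.exp_add]
  congr 1
  · congr 1; push_cast; ring
  · ring

/-- Plancherel in lintegral form. -/
lemma planch (K : 𝓢(EuclideanSpace ℝ (Fin n), E)) :
    ∫⁻ x, (‖(𝓕⁻ K : 𝓢(EuclideanSpace ℝ (Fin n), E)) x‖₊ : ℝ≥0∞) ^ (2 : ℝ) =
      ∫⁻ ξ, (‖K ξ‖₊ : ℝ≥0∞) ^ (2 : ℝ) := by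
  have h := integral_norm_sq_fourier (𝓕⁻ K : 𝓢(EuclideanSpace ℝ (Fin n), E))
  have int : ∀ K : 𝓢(EuclideanSpace ℝ (Fin n), E), Integrable (fun x => ‖K x‖ ^ 2) := fun K =>
    (memLp_two_iff_integrable_sq_norm (K.integrable.aestronglyMeasurable)).1 (K.memLp 2)
  have conv : ∀ K : 𝓢(EuclideanSpace ℝ (Fin n), E), ∫⁻ ξ, (‖K ξ‖₊ : ℝ≥0∞) ^ (2 : ℝ) =
      ENNReal.ofReal (∫ ξ, ‖K ξ‖ ^ 2) := by
    intro K
    rw [ofReal_integral_eq_lintegral_ofReal (int K) (Filter.Eventually.of_forall fun x => by positivity)]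
    congr 1
    ext ξ
    rw [ENNReal.ofReal_pow (norm_nonneg _), ofReal_norm]
    norm_cast
  rw [conv, conv, ← h]
  simp
end rep
section moments
open scoped Pointwise
variable {n : ℕ}

lemma exists_iso {v w : EuclideanSpace ℝ (Fin n)} (h : ‖v‖ = ‖w‖) :
    ∃ R : EuclideanSpace ℝ (Fin n) ≃ₗᵢ[ℝ] EuclideanSpace ℝ (Fin n),
      ∀ z, inner ℝ (R z) w = inner ℝ z v := by
  refine ⟨Submodule.reflection (Submodule.span ℝ {v - w})ᗮ, fun z => ?_⟩
  have h1 := Submodule.reflection_sub h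
  have h2 := LinearIsometryEquiv.inner_map_map (Submodule.reflection (Submodule.span ℝ {v - w})ᗮ) z v
  rwa [h1] at h2

def mom (n k : ℕ) (t : ℝ) (v : EuclideanSpace ℝ (Fin n)) : ℝ :=
  ∫ z in closedBall (0 : EuclideanSpace ℝ (Fin n)) t, (inner ℝ z v) ^ k

lemma intOn {φ : EuclideanSpace ℝ (Fin n) → ℝ} (h : Continuous φ) (t : ℝ) :
    IntegrableOn φ (closedBall 0 t) :=
  h.continuousOn.integrableOn_compact (isCompact_closedBall _ _)

lemma mom_inv (k : ℕ) (t : ℝ) {v w : EuclideanSpace ℝ (Fin n)} (h : ‖v‖ = ‖w‖) :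
    mom n k t v = mom n k t w := by
  obtain ⟨R, hR⟩ := exists_iso h
  have := R.measurePreserving.setIntegral_preimage_emb R.toHomeomorph.measurableEmbedding
    (fun z => (inner ℝ z w) ^ k) (closedBall 0 t)
  simp only [hR] at this
  rw [mom, mom, ← this]
  congr 2
  ext z
  simp

lemma mom_smul (k : ℕ) (t c : ℝ) (v : EuclideanSpace ℝ (Fin n)) :
    mom n k t (c • v) = c ^ k * mom n k t v := by
  rw [mom, mom, ← integral_const_mul]
  congr 1; ext z
  rw [inner_smul_right, mul_pow]

lemma mom_eq (k : ℕ) (t : ℝ) (v e : EuclideanSpace ℝ (Fin n)) (he : ‖e‖ = 1) :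
    mom n k t v = ‖v‖ ^ k * mom n k t e := by
  rw [← mom_smul]
  apply mom_inv
  rw [norm_smul, he]; simp

lemma sum_inner_sq (z : EuclideanSpace ℝ (Fin n)) :
    ∑ j, (inner ℝ z (EuclideanSpace.single j (1 : ℝ))) ^ 2 = ‖z‖ ^ 2 := by
  rw [EuclideanSpace.norm_sq_eq]
  simp [EuclideanSpace.inner_single_right]

lemma mom_two (hn : 0 < n) (t : ℝ) (v : EuclideanSpace ℝ (Fin n)) :
    mom n 2 t v ≤ ‖v‖ ^ 2 * t ^ 2 / n * volume.real (closedBall (0 : EuclideanSpace ℝ (Fin n)) t) := by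
  let e : EuclideanSpace ℝ (Fin n) := EuclideanSpace.single ⟨0, hn⟩ 1
  have he : ‖e‖ = 1 := by simp [e]
  have h1 : ∑ j : Fin n, mom n 2 t (EuclideanSpace.single j 1) = n * mom n 2 t e := by
    rw [Finset.sum_congr rfl (fun j _ => mom_inv 2 t (w := e) (by simp [he]))]
    simp
  have h2 : ∑ j : Fin n, mom n 2 t (EuclideanSpace.single j 1) ≤
      t ^ 2 * volume.real (closedBall (0 : EuclideanSpace ℝ (Fin n)) t) := by
    simp only [mom]
    rw [← integral_finsetSum _ (fun j _ => intOn (by fun_prop) t)]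
    simp only [sum_inner_sq]
    have := setIntegral_mono_on (μ := volume) (s := closedBall (0 : EuclideanSpace ℝ (Fin n)) t)
      (f := fun z => ‖z‖ ^ 2) (g := fun _ => t ^ 2) (intOn (by fun_prop) t) (intOn (by fun_prop) t)
      measurableSet_closedBall (fun z hz => by
        have : ‖z‖ ≤ t := by simpa using hz
        gcongr)
    refine this.trans (le_of_eq ?_)
    simp [mul_comm]
  rw [h1] at h2
  rw [mom_eq 2 t v e he]
  have hn' : (0 : ℝ) < n := by exact_mod_cast hn
  rw [mul_div_assoc, mul_assoc]
  gcongr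
  rw [div_mul_eq_mul_div, le_div_iff₀ hn']
  linarith

lemma mom_four (hn : 0 < n) (t : ℝ) (v : EuclideanSpace ℝ (Fin n)) :
    mom n 4 t v ≤ 3 * ‖v‖ ^ 4 * t ^ 4 / n ^ 2 *
      volume.real (closedBall (0 : EuclideanSpace ℝ (Fin n)) t) := by
  let e : EuclideanSpace ℝ (Fin n) := EuclideanSpace.single ⟨0, hn⟩ 1
  have he : ‖e‖ = 1 := by simp [e]
  have hn' : (0 : ℝ) < n := by exact_mod_cast hn
  have hM : 0 ≤ mom n 4 t e := by
    rw [mom]; exact integral_nonneg fun z => by positivity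
  have hj : ∀ j : Fin n, mom n 4 t e / 3 ≤ ∫ z in closedBall (0 : EuclideanSpace ℝ (Fin n)) t,
      (inner ℝ z e) ^ 2 * (inner ℝ z (EuclideanSpace.single j (1 : ℝ))) ^ 2 := by
    intro j
    by_cases hj : j = ⟨0, hn⟩
    · subst hj
      have : ∫ z in closedBall (0 : EuclideanSpace ℝ (Fin n)) t,
          (inner ℝ z e) ^ 2 * (inner ℝ z (EuclideanSpace.single ⟨0, hn⟩ (1 : ℝ))) ^ 2 = mom n 4 t e := by
        rw [mom]; congr 1; ext z
        change (inner ℝ z e) ^ 2 * (inner ℝ z e) ^ 2 = _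
        ring
      rw [this]; linarith
    · set w : EuclideanSpace ℝ (Fin n) := EuclideanSpace.single j 1 with hw
      have hw1 : ‖w‖ = 1 := by simp [w]
      have how : inner ℝ e w = 0 := by
        simp [e, w, EuclideanSpace.inner_single_left, Ne.symm hj]
      have n1 : ‖e + w‖ ^ 2 = 2 := by
        rw [norm_add_sq_real, how, he, hw1]; norm_num
      have n2 : ‖e - w‖ ^ 2 = 2 := by
        rw [norm_sub_sq_real, how, he, hw1]; norm_num
      have a1 : mom n 4 t (e + w) = 4 * mom n 4 t e := by
        rw [mom_eq 4 t (e + w) e he, show ‖e + w‖ ^ 4 = (‖e + w‖ ^ 2) ^ 2 by ring, n1]; norm_num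
      have a2 : mom n 4 t (e - w) = 4 * mom n 4 t e := by
        rw [mom_eq 4 t (e - w) e he, show ‖e - w‖ ^ 4 = (‖e - w‖ ^ 2) ^ 2 by ring, n2]; norm_num
      have a3 : mom n 4 t w = mom n 4 t e := mom_inv 4 t (by rw [he, hw1])
      have a4 : mom n 4 t (e + w) + mom n 4 t (e - w) = 2 * mom n 4 t e + 2 * mom n 4 t w +
          12 * ∫ z in closedBall (0 : EuclideanSpace ℝ (Fin n)) t, (inner ℝ z e) ^ 2 * (inner ℝ z w) ^ 2 := by
        simp only [mom]
        rw [← integral_const_mul, ← integral_const_mul, ← integral_const_mul,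
          ← integral_add (intOn (by fun_prop) t) (intOn (by fun_prop) t),
          ← integral_add (intOn (by fun_prop) t) (intOn (by fun_prop) t),
          ← integral_add (intOn (by fun_prop) t) (intOn (by fun_prop) t)]
        congr 1; ext z
        rw [inner_add_right, inner_sub_right]; ring
      linarith
  have h1 := Finset.sum_le_sum (s := Finset.univ) (fun j _ => hj j)
  rw [← integral_finsetSum _ (fun j _ => intOn (by fun_prop) t)] at h1
  simp only [← Finset.mul_sum, sum_inner_sq] at h1
  have h2 := setIntegral_mono_on (μ := volume) (s := closedBall (0 : EuclideanSpace ℝ (Fin n)) t)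
      (f := fun z => (inner ℝ z e) ^ 2 * ‖z‖ ^ 2) (g := fun z => t ^ 2 * (inner ℝ z e) ^ 2)
      (intOn (by fun_prop) t) (intOn (by fun_prop) t)
      measurableSet_closedBall (fun z hz => by
        have : ‖z‖ ≤ t := by simpa using hz
        rw [mul_comm]
        gcongr)
  rw [integral_const_mul] at h2
  have h3 := mom_two hn t e
  rw [he] at h3
  simp only [Finset.sum_const, Finset.card_univ, Fintype.card_fin, nsmul_eq_mul] at h1
  have h4 : n * (mom n 4 t e / 3) ≤ t ^ 2 * (1 ^ 2 * t ^ 2 / n * volume.real (closedBall (0 : EuclideanSpace ℝ (Fin n)) t)) :=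
    h1.trans (h2.trans (mul_le_mul_of_nonneg_left h3 (by positivity)))
  rw [mom_eq 4 t v e he]
  set W := volume.real (closedBall (0 : EuclideanSpace ℝ (Fin n)) t)
  have h5 : mom n 4 t e ≤ 3 * t ^ 4 / n ^ 2 * W := by
    rw [div_mul_eq_mul_div, le_div_iff₀ (by positivity)]
    have := mul_le_mul_of_nonneg_left h4 (show (0:ℝ) ≤ 3 * n by positivity)
    calc _ = 3 * n * (n * (mom n 4 t e / 3)) := by ring
      _ ≤ _ := this
      _ = _ := by field_simp
  calc _ ≤ ‖v‖ ^ 4 * (3 * t ^ 4 / n ^ 2 * W) := by gcongr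
    _ = _ := by ring

def sphR (R : EuclideanSpace ℝ (Fin n) ≃ₗᵢ[ℝ] EuclideanSpace ℝ (Fin n))
    (σ : sphere (0 : EuclideanSpace ℝ (Fin n)) 1) : sphere (0 : EuclideanSpace ℝ (Fin n)) 1 :=
  ⟨R σ, by simp⟩

lemma sphR_mp (R : EuclideanSpace ℝ (Fin n) ≃ₗᵢ[ℝ] EuclideanSpace ℝ (Fin n)) :
    MeasurePreserving (sphR R) (volume : Measure (EuclideanSpace ℝ (Fin n))).toSphere
      (volume : Measure (EuclideanSpace ℝ (Fin n))).toSphere := by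
  have hc : Continuous (sphR R) := by
    unfold sphR
    fun_prop
  refine ⟨hc.measurable, ?_⟩
  ext s hs
  rw [Measure.map_apply hc.measurable hs, Measure.toSphere_apply' _ hs,
    Measure.toSphere_apply' _ (hc.measurable hs)]
  congr 1
  rw [← R.measurePreserving.measure_preimage_emb R.toHomeomorph.measurableEmbedding
    (Ioo (0 : ℝ) 1 • (Subtype.val '' s))]
  congr 1
  ext z
  simp only [Set.mem_smul, Set.mem_image, Set.mem_preimage]
  constructor
  · rintro ⟨r, hr, _, ⟨σ, hσ, rfl⟩, rfl⟩
    exact ⟨r, hr, _, ⟨_, hσ, rfl⟩, by simp [sphR]⟩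
  · rintro ⟨r, hr, _, ⟨σ, hσ, rfl⟩, h⟩
    refine ⟨r, hr, R.symm σ, ⟨⟨R.symm σ, by simp⟩, ?_, rfl⟩, ?_⟩
    · simpa [sphR] using hσ
    · rw [← map_smul, h]; simp

def sph (v : EuclideanSpace ℝ (Fin n)) : ℝ≥0∞ :=
  ∫⁻ σ : sphere (0 : EuclideanSpace ℝ (Fin n)) 1,
    ENNReal.ofReal ((inner ℝ (σ : EuclideanSpace ℝ (Fin n)) v) ^ 2)
    ∂((volume : Measure (EuclideanSpace ℝ (Fin n))).toSphere)

lemma sph_inv {v w : EuclideanSpace ℝ (Fin n)} (h : ‖v‖ = ‖w‖) : sph v = sph w := by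
  obtain ⟨R, hR⟩ := exists_iso h
  have := (sphR_mp R).lintegral_comp (f := fun σ : sphere (0 : EuclideanSpace ℝ (Fin n)) 1 =>
    ENNReal.ofReal ((inner ℝ (σ : EuclideanSpace ℝ (Fin n)) w) ^ 2)) (by fun_prop)
  rw [sph, sph, ← this]
  congr 1; ext σ
  simp only [sphR]
  rw [hR]

lemma sph_eq (hn : 0 < n) (v : EuclideanSpace ℝ (Fin n)) :
    sph v / (volume : Measure (EuclideanSpace ℝ (Fin n))).toSphere univ =
      ENNReal.ofReal (‖v‖ ^ 2 / n) := by
  let e : EuclideanSpace ℝ (Fin n) := EuclideanSpace.single ⟨0, hn⟩ 1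
  have he : ‖e‖ = 1 := by simp [e]
  have hn' : (0 : ℝ) < n := by exact_mod_cast hn
  have h1 : ∑ j : Fin n, sph (EuclideanSpace.single j (1 : ℝ)) = n * sph e := by
    rw [Finset.sum_congr rfl (fun j _ => sph_inv (w := e) (by simp [he]))]
    simp
  have h2 : ∑ j : Fin n, sph (EuclideanSpace.single j (1 : ℝ)) =
      (volume : Measure (EuclideanSpace ℝ (Fin n))).toSphere univ := by
    simp only [sph]
    rw [← lintegral_finsetSum _ (fun j _ => by fun_prop)]
    simp_rw [← ENNReal.ofReal_sum_of_nonneg (fun j _ => sq_nonneg _), sum_inner_sq]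
    simp
  have h3 : sph v = ENNReal.ofReal (‖v‖ ^ 2) * sph e := by
    rw [sph_inv (w := ‖v‖ • e) (by rw [norm_smul, he]; simp), sph, sph,
      ← lintegral_const_mul _ (by fun_prop)]
    congr 1; ext σ
    rw [inner_smul_right, mul_pow, ENNReal.ofReal_mul (by positivity)]
  have : Nonempty (Fin n) := ⟨⟨0, hn⟩⟩
  have hT0 : (volume : Measure (EuclideanSpace ℝ (Fin n))).toSphere univ ≠ 0 := by
    rw [Ne, Measure.measure_univ_eq_zero]
    exact Measure.toSphere_ne_zero _
  have hTt : (volume : Measure (EuclideanSpace ℝ (Fin n))).toSphere univ ≠ ⊤ := measure_ne_top _ _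
  rw [← h2, h1] at hT0 hTt ⊢
  have hs0 : sph e ≠ 0 := right_ne_zero_of_mul hT0
  have hst : sph e ≠ ⊤ := by
    intro h
    rw [h, ENNReal.mul_top (by exact_mod_cast hn.ne')] at hTt
    exact hTt rfl
  rw [h3, ENNReal.mul_div_mul_right _ _ hs0 hst, ENNReal.ofReal_div_of_pos hn', ENNReal.ofReal_natCast]
end moments
section kernelBound
open Complex
open scoped Real
variable {n : ℕ}

lemma exp_bound (θ : ℝ) : ‖cexp (θ * I) - 1 - θ * I‖ ≤ 3 * θ ^ 2 := by
  have hn : ‖(θ : ℂ) * I‖ = |θ| := by simp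
  rcases le_or_gt |θ| 1 with h | h
  · have := Complex.norm_exp_sub_one_sub_id_le (x := θ * I) (by rw [hn]; exact h)
    rw [hn, sq_abs] at this
    nlinarith [sq_nonneg θ]
  · have h1 : ‖cexp (θ * I) - 1 - θ * I‖ ≤ 1 + 1 + |θ| := by
      refine (norm_sub_le _ _).trans ?_
      rw [hn]
      gcongr
      refine (norm_sub_le _ _).trans ?_
      rw [Complex.norm_exp_ofReal_mul_I, norm_one]
    rw [← sq_abs]
    nlinarith

lemma gen_bound1 (θ ρ : ℝ) (hρ : 0 ≤ ρ) :
    ‖cexp (θ * I) - (1 + θ * I) * (Real.exp (-ρ) : ℂ)‖ ^ 2 ≤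
      3 * (9 * θ ^ 4 + ρ ^ 2 + θ ^ 2 * ρ ^ 2) := by
  have h1 : ‖cexp (θ * I) - (1 + θ * I) * (Real.exp (-ρ) : ℂ)‖ ≤ 3 * θ ^ 2 + (1 + |θ|) * ρ := by
    have : cexp (θ * I) - (1 + θ * I) * (Real.exp (-ρ) : ℂ) =
      (cexp (θ * I) - 1 - θ * I) + (1 + θ * I) * ((1 - Real.exp (-ρ) : ℝ) : ℂ) := by
      push_cast; ring
    rw [this]
    refine (norm_add_le _ _).trans (add_le_add (exp_bound θ) ?_)
    rw [norm_mul, Complex.norm_real]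
    have e1 : ‖(1 : ℂ) + θ * I‖ ≤ 1 + |θ| := (norm_add_le _ _).trans (by simp)
    have e2 : ‖1 - Real.exp (-ρ)‖ ≤ ρ := by
      have a := Real.add_one_le_exp (-ρ)
      have b : Real.exp (-ρ) ≤ 1 := Real.exp_le_one_iff.2 (by linarith)
      rw [Real.norm_eq_abs, abs_of_nonneg (by linarith)]; linarith
    gcongr
  have h2 := pow_le_pow_left₀ (norm_nonneg _) h1 2
  refine h2.trans ?_
  have hs : |θ| ^ 2 = θ ^ 2 := sq_abs θ
  have : (3 * θ ^ 2 + (1 + |θ|) * ρ) ^ 2 ≤ 3 * ((3 * θ ^ 2) ^ 2 + ρ ^ 2 + (|θ| * ρ) ^ 2) := by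
    nlinarith [sq_nonneg (3 * θ ^ 2 - ρ), sq_nonneg (3 * θ ^ 2 - |θ| * ρ), sq_nonneg (ρ - |θ| * ρ)]
  refine this.trans (le_of_eq ?_)
  rw [mul_pow |θ|, hs]; ring

lemma gen_bound2 (θ ρ : ℝ) :
    ‖cexp (θ * I) - (1 + θ * I) * (Real.exp (-ρ) : ℂ)‖ ^ 2 ≤
      2 * (1 + (1 + θ ^ 2) * Real.exp (-ρ) ^ 2) := by
  have h1 : ‖cexp (θ * I) - (1 + θ * I) * (Real.exp (-ρ) : ℂ)‖ ≤ 1 + ‖(1 : ℂ) + θ * I‖ * Real.exp (-ρ) := by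
    refine (norm_sub_le _ _).trans ?_
    rw [Complex.norm_exp_ofReal_mul_I, norm_mul, Complex.norm_real, Real.norm_eq_abs, Real.abs_exp]
  have h3 : ‖(1 : ℂ) + θ * I‖ ^ 2 = 1 + θ ^ 2 := by
    rw [Complex.sq_norm, Complex.normSq_apply]; simp; ring
  refine (pow_le_pow_left₀ (norm_nonneg _) h1 2).trans ?_
  rw [← h3]
  nlinarith [sq_nonneg (1 - ‖(1 : ℂ) + θ * I‖ * Real.exp (-ρ))]

lemma mult_eq (z : EuclideanSpace ℝ (Fin n)) (s : ℝ) (ξ : EuclideanSpace ℝ (Fin n)) :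
    mult z s ξ = cexp ((2 * π * inner ℝ z ξ : ℝ) * I) -
      (1 + (2 * π * inner ℝ z ξ : ℝ) * I) * (Real.exp (-(4 * π ^ 2 * s * ‖ξ‖ ^ 2)) : ℂ) := by
  rw [mult, gaussM, real_inner_comm]
  congr 1
  · congr 1; push_cast; ring
  · push_cast
    congr 1
    · ring
    · congr 1; ring

lemma avg_bound (hn : 0 < n) (t : ℝ) (ht : 0 < t) (ξ : EuclideanSpace ℝ (Fin n)) (b : ℝ)
    (hb : b = 4 * π ^ 2 * ‖ξ‖ ^ 2 / n) :
    ∫ z in closedBall (0 : EuclideanSpace ℝ (Fin n)) t, ‖mult z (t ^ 2 / n) ξ‖ ^ 2 ≤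
      90 * min (b ^ 2 * t ^ 4) 1 * volume.real (closedBall (0 : EuclideanSpace ℝ (Fin n)) t) := by
  set W := volume.real (closedBall (0 : EuclideanSpace ℝ (Fin n)) t) with hW
  have hn' : (0 : ℝ) < n := by exact_mod_cast hn
  set ρ := b * t ^ 2 with hρ
  have hb0 : 0 ≤ b := by rw [hb]; positivity
  have hρ0 : 0 ≤ ρ := by positivity
  have hρ' : 4 * π ^ 2 * (t ^ 2 / n) * ‖ξ‖ ^ 2 = ρ := by rw [hρ, hb]; ring
  have m2 := mom_two hn t ξ
  have m4 := mom_four hn t ξ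
  rw [← hW] at m2 m4
  have hW0 : 0 ≤ W := measureReal_nonneg
  have M2 : 4 * π ^ 2 * mom n 2 t ξ ≤ ρ * W := by
    have := mul_le_mul_of_nonneg_left m2 (show 0 ≤ 4 * π ^ 2 by positivity)
    refine this.trans (le_of_eq ?_)
    rw [← hρ']; ring
  have M4 : 16 * π ^ 4 * mom n 4 t ξ ≤ 3 * ρ ^ 2 * W := by
    have := mul_le_mul_of_nonneg_left m4 (show 0 ≤ 16 * π ^ 4 by positivity)
    refine this.trans (le_of_eq ?_)
    rw [← hρ']; ring
  have hcont : Continuous (fun z => ‖mult z (t ^ 2 / n) ξ‖ ^ 2) := by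
    simp only [mult_eq]; fun_prop
  rw [show b ^ 2 * t ^ 4 = ρ ^ 2 by rw [hρ]; ring]
  rcases le_or_gt ρ 1 with h | h
  · rw [min_eq_left (by nlinarith)]
    have h1 := setIntegral_mono_on (μ := volume) (s := closedBall (0 : EuclideanSpace ℝ (Fin n)) t)
      (f := fun z => ‖mult z (t ^ 2 / n) ξ‖ ^ 2)
      (g := fun z => 432 * π ^ 4 * (inner ℝ z ξ) ^ 4 + 3 * ρ ^ 2 +
        12 * π ^ 2 * ρ ^ 2 * (inner ℝ z ξ) ^ 2)
      (intOn hcont t) (intOn (by fun_prop) t) measurableSet_closedBall (fun z hz => by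
        have := gen_bound1 (2 * π * inner ℝ z ξ) ρ hρ0
        rw [mult_eq, hρ']
        refine this.trans (le_of_eq ?_)
        ring)
    have h2 : ∫ z in closedBall (0 : EuclideanSpace ℝ (Fin n)) t, (432 * π ^ 4 * (inner ℝ z ξ) ^ 4 + 3 * ρ ^ 2 +
        12 * π ^ 2 * ρ ^ 2 * (inner ℝ z ξ) ^ 2) =
        432 * π ^ 4 * mom n 4 t ξ + 3 * ρ ^ 2 * W + 12 * π ^ 2 * ρ ^ 2 * mom n 2 t ξ := by
      rw [integral_add (intOn (by fun_prop) t) (intOn (by fun_prop) t),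
        integral_add (intOn (by fun_prop) t) (intOn (by fun_prop) t), integral_const_mul (432 * π ^ 4),
        integral_const_mul (12 * π ^ 2 * ρ ^ 2), setIntegral_const, smul_eq_mul]
      simp only [mom, hW]
      ring
    rw [h2] at h1
    refine h1.trans ?_
    have h3 := mul_le_mul_of_nonneg_left M2 (show 0 ≤ 3 * ρ ^ 2 by positivity)
    have h4 : 3 * ρ ^ 2 * (ρ * W) ≤ 3 * ρ ^ 2 * (1 * W) := by gcongr
    nlinarith [mul_nonneg (sq_nonneg ρ) hW0]
  · rw [min_eq_right (by nlinarith)]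
    have h1 := setIntegral_mono_on (μ := volume) (s := closedBall (0 : EuclideanSpace ℝ (Fin n)) t)
      (f := fun z => ‖mult z (t ^ 2 / n) ξ‖ ^ 2)
      (g := fun z => (2 + 2 * Real.exp (-ρ) ^ 2) +
        8 * π ^ 2 * Real.exp (-ρ) ^ 2 * (inner ℝ z ξ) ^ 2)
      (intOn hcont t) (intOn (by fun_prop) t) measurableSet_closedBall (fun z hz => by
        have := gen_bound2 (2 * π * inner ℝ z ξ) ρ
        rw [mult_eq, hρ']
        refine this.trans (le_of_eq ?_)
        ring)
    have h2 : ∫ z in closedBall (0 : EuclideanSpace ℝ (Fin n)) t, ((2 + 2 * Real.exp (-ρ) ^ 2) +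
        8 * π ^ 2 * Real.exp (-ρ) ^ 2 * (inner ℝ z ξ) ^ 2) =
        (2 + 2 * Real.exp (-ρ) ^ 2) * W + 8 * π ^ 2 * Real.exp (-ρ) ^ 2 * mom n 2 t ξ := by
      rw [integral_add (intOn (by fun_prop) t) (intOn (by fun_prop) t), integral_const_mul]
      simp only [mom, hW]
      simp [mul_comm]
    rw [h2] at h1
    refine h1.trans ?_
    set ε := Real.exp (-ρ) with hε
    have e0 : 0 < ε := Real.exp_pos _
    have e1 : ε ≤ 1 := Real.exp_le_one_iff.2 (by linarith)
    have e2 : (1 + ρ) * ε ≤ 1 := by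
      have := Real.add_one_le_exp ρ
      calc (1 + ρ) * ε ≤ Real.exp ρ * ε := by gcongr; linarith
        _ = 1 := by rw [hε, ← Real.exp_add]; simp
    have e3 : (1 + ρ) * ε ^ 2 ≤ 1 := by nlinarith
    have h3 := mul_le_mul_of_nonneg_left M2 (show 0 ≤ 2 * ε ^ 2 by positivity)
    have h4 := mul_le_mul_of_nonneg_right e3 hW0
    nlinarith

lemma avg_bound' (hn : 0 < n) (t : ℝ) (ht : 0 < t) (ξ : EuclideanSpace ℝ (Fin n)) (b : ℝ)
    (hb : b = 4 * π ^ 2 * ‖ξ‖ ^ 2 / n) :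
    (∫⁻ z in closedBall (0 : EuclideanSpace ℝ (Fin n)) t, (‖mult z (t ^ 2 / n) ξ‖₊ : ℝ≥0∞) ^ (2 : ℝ)) ≤
      ENNReal.ofReal (90 * min (b ^ 2 * t ^ 4) 1) * volume (closedBall (0 : EuclideanSpace ℝ (Fin n)) t) := by
  have hcont : Continuous (fun z => ‖mult z (t ^ 2 / n) ξ‖ ^ 2) := by
    simp only [mult_eq]; fun_prop
  have h := ENNReal.ofReal_le_ofReal (avg_bound hn t ht ξ b hb)
  rw [ENNReal.ofReal_mul (by positivity), ofReal_measureReal measure_closedBall_lt_top.ne,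
    ofReal_integral_eq_lintegral_ofReal (intOn hcont t) (Filter.Eventually.of_forall fun x => by positivity)] at h
  refine le_trans (le_of_eq ?_) h
  congr 1; ext z
  rw [ENNReal.ofReal_pow (norm_nonneg _), ofReal_norm]
  norm_cast

lemma time_bound (b : ℝ) (hb : 0 ≤ b) :
    ∫⁻ t in Ioi (0 : ℝ), ENNReal.ofReal (90 * min (b ^ 2 * t ^ 4) 1) / ENNReal.ofReal (t ^ 3) ≤
      ENNReal.ofReal (144 * b) := by
  have e : ∀ t ∈ Ioi (0 : ℝ), ENNReal.ofReal (90 * min (b ^ 2 * t ^ 4) 1) / ENNReal.ofReal (t ^ 3) =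
      ENNReal.ofReal (90 * min (b ^ 2 * t ^ 4) 1 / t ^ 3) := by
    intro t ht
    have ht : 0 < t := ht
    rw [ENNReal.ofReal_div_of_pos (by positivity)]
  rw [setLIntegral_congr_fun measurableSet_Ioi e]
  rcases hb.eq_or_lt with rfl | hb
  · simp
  set c := (Real.sqrt b)⁻¹ with hc
  have hsb : 0 < Real.sqrt b := Real.sqrt_pos.2 hb
  have hc0 : 0 < c := by positivity
  have hc2 : b * c ^ 2 = 1 := by
    rw [hc, inv_pow, Real.sq_sqrt hb.le]; field_simp
  rw [← Ioc_union_Ioi_eq_Ioi hc0.le]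
  refine (lintegral_union_le _ _ _).trans ?_
  have h1 : ∫⁻ t in Ioc 0 c, ENNReal.ofReal (90 * min (b ^ 2 * t ^ 4) 1 / t ^ 3) ≤ ENNReal.ofReal (90 * b) := by
    calc _ ≤ ∫⁻ t in Ioc 0 c, ENNReal.ofReal (90 * b ^ 2 * c) := by
          refine setLIntegral_mono measurable_const fun t ht => ?_
          apply ENNReal.ofReal_le_ofReal
          have ht0 : 0 < t := ht.1
          rw [div_le_iff₀ (by positivity)]
          calc 90 * min (b ^ 2 * t ^ 4) 1 ≤ 90 * (b ^ 2 * t ^ 4) := by gcongr; exact min_le_left _ _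
            _ = 90 * b ^ 2 * t * t ^ 3 := by ring
            _ ≤ _ := by gcongr; exact ht.2
      _ = ENNReal.ofReal (90 * b) := by
          rw [setLIntegral_const, Real.volume_Ioc, sub_zero, ← ENNReal.ofReal_mul (by positivity)]
          congr 1
          calc _ = 90 * b * (b * c ^ 2) := by ring
            _ = _ := by rw [hc2]; ring
  have h2 : ∫⁻ t in Ioi c, ENNReal.ofReal (90 * min (b ^ 2 * t ^ 4) 1 / t ^ 3) ≤ ENNReal.ofReal (45 * b) := by
    calc _ ≤ ∫⁻ t in Ioi c, ENNReal.ofReal (90 * t ^ (-3 : ℝ)) := by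
          refine setLIntegral_mono (by fun_prop) fun t ht => ?_
          apply ENNReal.ofReal_le_ofReal
          have ht0 : 0 < t := hc0.trans ht
          rw [Real.rpow_neg ht0.le, ← div_eq_mul_inv]
          norm_cast
          gcongr
          have := min_le_right (b ^ 2 * t ^ 4) 1
          linarith
      _ = ENNReal.ofReal (45 * b) := by
          rw [← ofReal_integral_eq_lintegral_ofReal]
          · rw [integral_const_mul, integral_Ioi_rpow_of_lt (by norm_num) hc0]
            congr 1
            have : c ^ ((-3 : ℝ) + 1) = b := by
              rw [show (-3 : ℝ) + 1 = -2 by norm_num, Real.rpow_neg hc0.le]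
              norm_cast
              field_simp
              linarith
            rw [this]; ring
          · exact (integrableOn_Ioi_rpow_of_lt (by norm_num) hc0).const_mul _
          · filter_upwards [ae_restrict_mem measurableSet_Ioi] with t ht
            have ht0 : 0 < t := hc0.trans ht
            positivity
  refine (add_le_add h1 h2).trans ?_
  rw [← ENNReal.ofReal_add (by positivity) (by positivity)]
  apply ENNReal.ofReal_le_ofReal
  linarith
end kernelBound
section core
open SchwartzMap FourierTransform Complex
open scoped Real LineDeriv SchwartzMap
variable {n : ℕ} {E : Type*} [NormedAddCommGroup E] [InnerProductSpace ℂ E] [CompleteSpace E]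

/-- The jointly measurable integrand. -/
def Phi (F : 𝓢(EuclideanSpace ℝ (Fin n), E))
    (p : EuclideanSpace ℝ (Fin n) × (ℝ × EuclideanSpace ℝ (Fin n))) : ℝ≥0∞ :=
  (‖∫ v, cexp (↑(2 * π * inner ℝ v p.1) * I) • (mult p.2.2 (p.2.1 ^ 2 / n) v • 𝓕 F v)‖₊ : ℝ≥0∞) ^ (2 : ℝ)

lemma Phi_eq (F : 𝓢(EuclideanSpace ℝ (Fin n), E)) (x : EuclideanSpace ℝ (Fin n))
    (t : ℝ) (z : EuclideanSpace ℝ (Fin n)) :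
    Phi F (x, t, z) = (‖(𝓕⁻ (smulLeftCLM E (mult z (t ^ 2 / n)) (𝓕 F)) :
      𝓢(EuclideanSpace ℝ (Fin n), E)) x‖₊ : ℝ≥0∞) ^ (2 : ℝ) := by
  rw [Phi, SchwartzMap.fourierInv_coe, Real.fourierInv_eq']
  simp only [smulLeftCLM_apply_apply (temp_mult z (t ^ 2 / n) (by positivity))]

lemma Phi_meas (F : 𝓢(EuclideanSpace ℝ (Fin n), E)) : Measurable (Phi F) := by
  have h : StronglyMeasurable (fun p : EuclideanSpace ℝ (Fin n) × (ℝ × EuclideanSpace ℝ (Fin n)) =>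
      ∫ v, cexp (↑(2 * π * inner ℝ v p.1) * I) • (mult p.2.2 (p.2.1 ^ 2 / n) v • 𝓕 F v)) := by
    apply StronglyMeasurable.integral_prod_right'
      (f := fun q : (EuclideanSpace ℝ (Fin n) × (ℝ × EuclideanSpace ℝ (Fin n))) × EuclideanSpace ℝ (Fin n) =>
        cexp (↑(2 * π * inner ℝ q.2 q.1.1) * I) • (mult q.1.2.2 (q.1.2.1 ^ 2 / n) q.2 • 𝓕 F q.2))
    apply Continuous.stronglyMeasurable
    simp only [mult, gaussM]
    fun_prop
  unfold Phi
  exact (h.enorm).pow_const _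

lemma Phi_int (F : 𝓢(EuclideanSpace ℝ (Fin n), E)) (t : ℝ) (z : EuclideanSpace ℝ (Fin n)) :
    ∫⁻ x, Phi F (x, t, z) = ∫⁻ ξ, (‖mult z (t ^ 2 / n) ξ‖₊ : ℝ≥0∞) ^ (2 : ℝ) *
      (‖𝓕 F ξ‖₊ : ℝ≥0∞) ^ (2 : ℝ) := by
  simp only [Phi_eq]
  rw [planch]
  congr 1; ext ξ
  rw [smulLeftCLM_apply_apply (temp_mult z (t ^ 2 / n) (by positivity)), nnnorm_smul,
    ENNReal.coe_mul, ENNReal.mul_rpow_of_nonneg _ _ (by norm_num)]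

def wt (n : ℕ) (p : ℝ × EuclideanSpace ℝ (Fin n)) : ℝ≥0∞ :=
  Set.indicator {p : ℝ × EuclideanSpace ℝ (Fin n) | ‖p.2‖ ≤ p.1}
    (fun p => (volume (closedBall (0 : EuclideanSpace ℝ (Fin n)) p.1))⁻¹ * (ENNReal.ofReal (p.1 ^ 3))⁻¹) p

lemma wt_meas : Measurable (wt n) := by
  have h : Monotone (fun t : ℝ => volume (closedBall (0 : EuclideanSpace ℝ (Fin n)) t)) :=
    fun a b hab => measure_mono (closedBall_subset_closedBall hab)
  have h' := h.measurable
  refine Measurable.indicator ?_ (isClosed_le (by fun_prop) (by fun_prop)).measurableSet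
  have h2 : Measurable (fun p : ℝ × EuclideanSpace ℝ (Fin n) =>
    volume (closedBall (0 : EuclideanSpace ℝ (Fin n)) p.1)) := h'.comp measurable_fst
  fun_prop

lemma wt_int (t : ℝ) (φ : EuclideanSpace ℝ (Fin n) → ℝ≥0∞) (hφ : Measurable φ) :
    ∫⁻ z, wt n (t, z) * φ z = (∫⁻ z in closedBall (0 : EuclideanSpace ℝ (Fin n)) t, φ z)
      / volume (closedBall (0 : EuclideanSpace ℝ (Fin n)) t) / ENNReal.ofReal (t ^ 3) := by
  rw [div_eq_mul_inv, div_eq_mul_inv, mul_assoc, mul_comm, ← lintegral_const_mul _ hφ,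
    ← lintegral_indicator measurableSet_closedBall]
  congr 1; ext z
  simp only [wt, Set.indicator, Set.mem_ofPred_eq, mem_closedBall, dist_zero_right]
  split_ifs <;> simp

lemma lhs_eq (F : 𝓢(EuclideanSpace ℝ (Fin n), E)) (hn : 0 < n) :
    (∫⁻ x, ∫⁻ t in Set.Ioi (0 : ℝ),
            ((∫⁻ y in closedBall x t,
                (‖F y - taylor1 (heat (t ^ 2 / n) F) x y‖₊ : ℝ≥0∞) ^ (2 : ℝ))
              / volume (closedBall x t))
              / ENNReal.ofReal (t ^ 3)) =
    ∫⁻ x, ∫⁻ p, wt n p * Phi F (x, p) ∂((volume.restrict (Ioi (0 : ℝ))).prod volume) := by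
  congr 1; ext x
  have hm : Measurable (fun p => wt n p * Phi F (x, p)) :=
    wt_meas.mul ((Phi_meas F).comp measurable_prodMk_left)
  rw [lintegral_prod _ hm.aemeasurable]
  refine setLIntegral_congr_fun measurableSet_Ioi fun t ht => ?_
  have ht : 0 < t := ht
  have hz : Measurable (fun z => Phi F (x, t, z)) :=
    (Phi_meas F).comp (g := Phi F) (f := fun z => (x, t, z)) (by fun_prop)
  rw [wt_int t (fun z => Phi F (x, t, z)) hz,
    Measure.addHaar_closedBall_center volume x]
  congr 2
  have hmp := measurePreserving_add_left (volume : Measure (EuclideanSpace ℝ (Fin n))) x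
  rw [← hmp.setLIntegral_comp_preimage_emb (measurableEmbedding_addLeft x)]
  have hs : (fun z => x + z) ⁻¹' closedBall x t = closedBall 0 t := by
    ext z; simp
  rw [hs]
  congr 1; ext z
  have hn' : (0 : ℝ) < n := by exact_mod_cast hn
  rw [Phi_eq, ← rep F (t ^ 2 / n) (by positivity)]

lemma multm_joint : Measurable (fun q : (ℝ × EuclideanSpace ℝ (Fin n)) × EuclideanSpace ℝ (Fin n) =>
      (‖mult q.1.2 (q.1.1 ^ 2 / n) q.2‖₊ : ℝ≥0∞) ^ (2 : ℝ)) := by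
  have hmultc : Continuous (fun q : (ℝ × EuclideanSpace ℝ (Fin n)) × EuclideanSpace ℝ (Fin n) =>
      mult q.1.2 (q.1.1 ^ 2 / n) q.2) := by
    simp only [mult, gaussM]; fun_prop
  exact (hmultc.measurable.nnnorm.coe_nnreal_ennreal).pow_const _

lemma multm_z (t : ℝ) (ξ : EuclideanSpace ℝ (Fin n)) :
    Measurable (fun z => (‖mult z (t ^ 2 / n) ξ‖₊ : ℝ≥0∞) ^ (2 : ℝ)) := by
  have hc : Continuous (fun z => mult z (t ^ 2 / n) ξ) := by
    simp only [mult, gaussM]; fun_prop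
  exact (hc.measurable.nnnorm.coe_nnreal_ennreal).pow_const _

lemma multm_p (ξ : EuclideanSpace ℝ (Fin n)) :
    Measurable (fun p : ℝ × EuclideanSpace ℝ (Fin n) =>
      (‖mult p.2 (p.1 ^ 2 / n) ξ‖₊ : ℝ≥0∞) ^ (2 : ℝ)) := by
  have hc : Continuous (fun p : ℝ × EuclideanSpace ℝ (Fin n) => mult p.2 (p.1 ^ 2 / n) ξ) := by
    simp only [mult, gaussM]; fun_prop
  exact (hc.measurable.nnnorm.coe_nnreal_ennreal).pow_const _

lemma multm_ξ (t : ℝ) (z : EuclideanSpace ℝ (Fin n)) :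
    Measurable (fun ξ => (‖mult z (t ^ 2 / n) ξ‖₊ : ℝ≥0∞) ^ (2 : ℝ)) := by
  have hc : Continuous (fun ξ => mult z (t ^ 2 / n) ξ) := by
    simp only [mult, gaussM]; fun_prop
  exact (hc.measurable.nnnorm.coe_nnreal_ennreal).pow_const _

lemma Fm (F : 𝓢(EuclideanSpace ℝ (Fin n), E)) :
    Measurable (fun ξ => (‖𝓕 F ξ‖₊ : ℝ≥0∞) ^ (2 : ℝ)) := by
  have : Continuous (fun ξ => ‖𝓕 F ξ‖₊) := by fun_prop
  exact (this.measurable.coe_nnreal_ennreal).pow_const _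

lemma time_int (hn : 0 < n) (ξ : EuclideanSpace ℝ (Fin n)) :
    ∫⁻ p : ℝ × EuclideanSpace ℝ (Fin n), wt n p * (‖mult p.2 (p.1 ^ 2 / n) ξ‖₊ : ℝ≥0∞) ^ (2 : ℝ)
      ∂((volume.restrict (Ioi (0 : ℝ))).prod volume) ≤
      ENNReal.ofReal (144 * (4 * π ^ 2 * ‖ξ‖ ^ 2 / n)) := by
  have hm1 : Measurable (fun p : ℝ × EuclideanSpace ℝ (Fin n) =>
      wt n p * (‖mult p.2 (p.1 ^ 2 / n) ξ‖₊ : ℝ≥0∞) ^ (2 : ℝ)) :=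
    wt_meas.mul (multm_p ξ)
  rw [lintegral_prod _ hm1.aemeasurable]
  refine le_trans ?_ (time_bound (4 * π ^ 2 * ‖ξ‖ ^ 2 / n) (by positivity))
  refine setLIntegral_mono' measurableSet_Ioi fun t ht => ?_
  have ht : 0 < t := ht
  rw [wt_int t (fun z => (‖mult z (t ^ 2 / n) ξ‖₊ : ℝ≥0∞) ^ (2 : ℝ)) (multm_z t ξ)]
  gcongr
  exact ENNReal.div_le_of_le_mul (avg_bound' hn t ht ξ _ rfl)

lemma lhs_h1 (F : 𝓢(EuclideanSpace ℝ (Fin n), E)) (p : ℝ × EuclideanSpace ℝ (Fin n)) :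
    ∫⁻ x, wt n p * Phi F (x, p) =
      ∫⁻ ξ, wt n p * ((‖mult p.2 (p.1 ^ 2 / n) ξ‖₊ : ℝ≥0∞) ^ (2 : ℝ) *
      (‖𝓕 F ξ‖₊ : ℝ≥0∞) ^ (2 : ℝ)) := by
  have hx : Measurable (fun x => Phi F (x, p)) := (Phi_meas F).comp measurable_prodMk_right
  have hy : Measurable (fun ξ => (‖mult p.2 (p.1 ^ 2 / n) ξ‖₊ : ℝ≥0∞) ^ (2 : ℝ) *
      (‖𝓕 F ξ‖₊ : ℝ≥0∞) ^ (2 : ℝ)) := (multm_ξ p.1 p.2).mul (Fm F)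
  rw [lintegral_const_mul _ hx, Phi_int F p.1 p.2, lintegral_const_mul _ hy]

lemma swap_aux {A B : Type*} [MeasurableSpace A] [MeasurableSpace B] (μ : Measure A) (ν : Measure B)
    [SFinite μ] [SFinite ν] (w : A → ℝ≥0∞) (m : A × B → ℝ≥0∞) (g : B → ℝ≥0∞)
    (hw : Measurable w) (hm : Measurable m) (hg : Measurable g) :
    ∫⁻ p, ∫⁻ ξ, w p * (m (p, ξ) * g ξ) ∂ν ∂μ = ∫⁻ ξ, (∫⁻ p, w p * m (p, ξ) ∂μ) * g ξ ∂ν := by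
  have hB : Measurable (Function.uncurry fun (p : A) (ξ : B) => w p * (m (p, ξ) * g ξ)) :=
    (hw.comp measurable_fst).mul (hm.mul (hg.comp measurable_snd))
  rw [lintegral_lintegral_swap hB.aemeasurable]
  refine lintegral_congr fun ξ => ?_
  have hx : Measurable (fun p => w p * m (p, ξ)) := hw.mul (hm.comp measurable_prodMk_right)
  rw [← lintegral_mul_const _ hx]
  simp only [mul_assoc]

lemma swap_aux2 {A B : Type*} [MeasurableSpace A] [MeasurableSpace B] (μ : Measure A) (ν : Measure B)
    [SFinite μ] [SFinite ν] (w : A → ℝ≥0∞) (m : B × A → ℝ≥0∞)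
    (hw : Measurable w) (hm : Measurable m) :
    ∫⁻ x, ∫⁻ p, w p * m (x, p) ∂μ ∂ν = ∫⁻ p, ∫⁻ x, w p * m (x, p) ∂ν ∂μ := by
  have hB : Measurable (Function.uncurry fun (x : B) (p : A) => w p * m (x, p)) :=
    (hw.comp measurable_snd).mul hm
  rw [lintegral_lintegral_swap hB.aemeasurable]

lemma lhs_bound (F : 𝓢(EuclideanSpace ℝ (Fin n), E)) (hn : 0 < n) :
    ∫⁻ x, ∫⁻ p, wt n p * Phi F (x, p) ∂((volume.restrict (Ioi (0 : ℝ))).prod volume) ≤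
      ∫⁻ ξ, ENNReal.ofReal (144 * (4 * π ^ 2 * ‖ξ‖ ^ 2 / n)) * (‖𝓕 F ξ‖₊ : ℝ≥0∞) ^ (2 : ℝ) := by
  rw [swap_aux2 _ _ _ _ wt_meas (Phi_meas F)]
  simp only [lhs_h1 F]
  rw [swap_aux ((volume.restrict (Ioi (0 : ℝ))).prod volume) volume (wt n)
    (fun q : (ℝ × EuclideanSpace ℝ (Fin n)) × EuclideanSpace ℝ (Fin n) =>
      (‖mult q.1.2 (q.1.1 ^ 2 / n) q.2‖₊ : ℝ≥0∞) ^ (2 : ℝ))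
    (fun ξ => (‖𝓕 F ξ‖₊ : ℝ≥0∞) ^ (2 : ℝ)) wt_meas multm_joint (Fm F)]
  refine lintegral_mono fun ξ => ?_
  exact mul_le_mul_left (time_int hn ξ) _

lemma dir_eq (F : 𝓢(EuclideanSpace ℝ (Fin n), E)) (σ : EuclideanSpace ℝ (Fin n)) :
    eLpNorm (dirDeriv σ F) 2 volume ^ (2 : ℝ) =
      ∫⁻ ξ, ENNReal.ofReal ((inner ℝ σ ξ) ^ 2) * 
        (ENNReal.ofReal (4 * π ^ 2) * (‖𝓕 F ξ‖₊ : ℝ≥0∞) ^ (2 : ℝ)) := by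
  have hd : dirDeriv σ F = (∂_{σ} F : 𝓢(EuclideanSpace ℝ (Fin n), E)) := by
    ext x
    rw [dirDeriv, lineDerivOp_apply_eq_fderiv]
    simp_rw [← map_smul, ← map_sum]
    congr 1
    have := (EuclideanSpace.basisFun (Fin n) ℝ).sum_repr σ
    simpa using this
  have h4 : ENNReal.ofReal (4 * π ^ 2) = 4 * ENNReal.ofReal (π ^ 2) := by
    rw [ENNReal.ofReal_mul (by norm_num)]; norm_num
  have hin : (inner ℝ · σ : EuclideanSpace ℝ (Fin n) → ℝ).HasTemperateGrowth := by fun_prop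
  have hp := planch (𝓕 (∂_{σ} F : 𝓢(EuclideanSpace ℝ (Fin n), E)))
  have : (𝓕⁻ (𝓕 (∂_{σ} F : 𝓢(EuclideanSpace ℝ (Fin n), E))) : 𝓢(EuclideanSpace ℝ (Fin n), E)) =
    ∂_{σ} F := by simp
  rw [this] at hp
  rw [hd, eLpNorm_eq_lintegral_rpow_enorm_toReal (by norm_num) (by norm_num), ← ENNReal.rpow_mul]
  simp only [ENNReal.toReal_ofNat]
  norm_num
  refine Eq.trans ?_ (hp.trans ?_)
  · congr 1; ext x
    norm_cast
  · refine lintegral_congr fun ξ => ?_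
    rw [← h4]
    rw [fourier_lineDerivOp_eq]
    simp only [smul_apply]
    rw [smulLeftCLM_apply_apply hin, nnnorm_smul, nnnorm_smul, real_inner_comm, ENNReal.coe_mul,
      ENNReal.coe_mul, ENNReal.mul_rpow_of_nonneg _ _ (by norm_num),
      ENNReal.mul_rpow_of_nonneg _ _ (by norm_num)]
    have hs : ∀ {G : Type _} [NormedAddCommGroup G] (a : G),
        (‖a‖₊ : ℝ≥0∞) ^ (2 : ℝ) = ENNReal.ofReal (‖a‖ ^ 2) := by
      intro G _ a
      rw [ENNReal.ofReal_pow (norm_nonneg a), ofReal_norm, ENNReal.rpow_two, enorm_eq_nnnorm]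
    have h2 : ‖(2 * π * I : ℂ)‖ = 2 * π := by
      simp [abs_of_pos Real.pi_pos]
    have e1 : (‖(2 * π * I : ℂ)‖₊ : ℝ≥0∞) ^ (2 : ℝ) = ENNReal.ofReal (4 * π ^ 2) := by
      rw [hs, h2]; congr 1; ring
    have e2 : (‖inner ℝ σ ξ‖₊ : ℝ≥0∞) ^ (2 : ℝ) = ENNReal.ofReal ((inner ℝ σ ξ) ^ 2) := by
      rw [hs, Real.norm_eq_abs, sq_abs]
    rw [e1, e2, mul_left_comm, ENNReal.rpow_two]

lemma rhs_eq (F : 𝓢(EuclideanSpace ℝ (Fin n), E)) (hn : 0 < n) :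
    ((∫⁻ σ : sphere (0 : EuclideanSpace ℝ (Fin n)) 1,
                  eLpNorm (dirDeriv (σ : EuclideanSpace ℝ (Fin n)) F) 2 volume ^ (2 : ℝ)
                  ∂((volume : Measure (EuclideanSpace ℝ (Fin n))).toSphere))
                / (volume : Measure (EuclideanSpace ℝ (Fin n))).toSphere Set.univ) =
      ∫⁻ ξ, ENNReal.ofReal (4 * π ^ 2 * ‖ξ‖ ^ 2 / n) * (‖𝓕 F ξ‖₊ : ℝ≥0∞) ^ (2 : ℝ) := by
  have hFm : Measurable (fun ξ => (‖𝓕 F ξ‖₊ : ℝ≥0∞) ^ (2 : ℝ)) := by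
    have : Continuous (fun ξ => ‖𝓕 F ξ‖₊) := by fun_prop
    exact (this.measurable.coe_nnreal_ennreal).pow_const _
  have hm : Measurable (fun q : sphere (0 : EuclideanSpace ℝ (Fin n)) 1 × EuclideanSpace ℝ (Fin n) =>
      ENNReal.ofReal ((inner ℝ (q.1 : EuclideanSpace ℝ (Fin n)) q.2) ^ 2)) := by
    apply ENNReal.measurable_ofReal.comp
    apply Continuous.measurable
    fun_prop
  simp only [dir_eq]
  have hB : Measurable (Function.uncurry fun (σ : sphere (0 : EuclideanSpace ℝ (Fin n)) 1)
      (ξ : EuclideanSpace ℝ (Fin n)) =>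
      ENNReal.ofReal ((inner ℝ (σ : EuclideanSpace ℝ (Fin n)) ξ) ^ 2) *
        (ENNReal.ofReal (4 * π ^ 2) * (‖𝓕 F ξ‖₊ : ℝ≥0∞) ^ (2 : ℝ))) :=
    hm.mul ((hFm.comp measurable_snd).const_mul _)
  rw [lintegral_lintegral_swap hB.aemeasurable]
  have h1 : ∀ ξ : EuclideanSpace ℝ (Fin n), ∫⁻ σ : sphere (0 : EuclideanSpace ℝ (Fin n)) 1,
      ENNReal.ofReal ((inner ℝ (σ : EuclideanSpace ℝ (Fin n)) ξ) ^ 2) * 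
        (ENNReal.ofReal (4 * π ^ 2) * (‖𝓕 F ξ‖₊ : ℝ≥0∞) ^ (2 : ℝ))
        ∂((volume : Measure (EuclideanSpace ℝ (Fin n))).toSphere) = 
        sph ξ * (ENNReal.ofReal (4 * π ^ 2) * (‖𝓕 F ξ‖₊ : ℝ≥0∞) ^ (2 : ℝ)) := by
    intro ξ
    have hσ : Measurable (fun σ : sphere (0 : EuclideanSpace ℝ (Fin n)) 1 =>
      ENNReal.ofReal ((inner ℝ (σ : EuclideanSpace ℝ (Fin n)) ξ) ^ 2)) :=
      ENNReal.measurable_ofReal.comp (Continuous.measurable (by fun_prop))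
    rw [lintegral_mul_const _ hσ]
    rfl
  simp only [h1]
  have hT0 : (volume : Measure (EuclideanSpace ℝ (Fin n))).toSphere univ ≠ 0 := by
    have : Nonempty (Fin n) := ⟨⟨0, hn⟩⟩
    rw [Ne, Measure.measure_univ_eq_zero]
    exact Measure.toSphere_ne_zero _
  rw [div_eq_mul_inv, ← lintegral_mul_const' _ _ (ENNReal.inv_ne_top.2 hT0)]
  congr 1; ext ξ
  have := sph_eq hn ξ
  rw [mul_right_comm, ← div_eq_mul_inv, this, ← mul_assoc, ← ENNReal.ofReal_mul (by positivity)]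
  congr 2
  ring

theorem core (F : 𝓢(EuclideanSpace ℝ (Fin n), E)) (hn : 0 < n) :
    (∫⁻ x, ∫⁻ t in Set.Ioi (0 : ℝ),
            ((∫⁻ y in closedBall x t,
                (‖F y - taylor1 (heat (t ^ 2 / n) F) x y‖₊ : ℝ≥0∞) ^ (2 : ℝ))
              / volume (closedBall x t))
              / ENNReal.ofReal (t ^ 3)) ^ ((1 : ℝ) / 2)
          ≤ ENNReal.ofReal 12 *
              ((∫⁻ σ : sphere (0 : EuclideanSpace ℝ (Fin n)) 1,
                  eLpNorm (dirDeriv (σ : EuclideanSpace ℝ (Fin n)) F) 2 volume ^ (2 : ℝ)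
                  ∂((volume : Measure (EuclideanSpace ℝ (Fin n))).toSphere))
                / (volume : Measure (EuclideanSpace ℝ (Fin n))).toSphere Set.univ)
                ^ ((1 : ℝ) / 2) := by
  rw [lhs_eq F hn, rhs_eq F hn]
  have h : ENNReal.ofReal 12 = (ENNReal.ofReal 144) ^ ((1 : ℝ) / 2) := by
    rw [ENNReal.ofReal_rpow_of_nonneg (by norm_num) (by norm_num), ← Real.sqrt_eq_rpow,
      show (144 : ℝ) = 12 ^ 2 by norm_num, Real.sqrt_sq (by norm_num)]
  rw [h, ← ENNReal.mul_rpow_of_nonneg _ _ (by norm_num), ← lintegral_const_mul' _ _ ENNReal.ofReal_ne_top]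
  apply ENNReal.rpow_le_rpow _ (by norm_num)
  refine (lhs_bound F hn).trans (le_of_eq ?_)
  congr 1; ext ξ
  rw [ENNReal.ofReal_mul (by norm_num), mul_assoc]
end core
section reduction

/-- The complex Hilbert space used to embed a real one. -/
lemma exists_embed (H : Type u) [NormedAddCommGroup H] [InnerProductSpace ℝ H] [CompleteSpace H] :
    ∃ (K : Type u) (_ : NormedAddCommGroup K) (_ : InnerProductSpace ℂ K) (_ : CompleteSpace K),
      Nonempty (H →ₗᵢ[ℝ] K) := by
  obtain ⟨w, b, -⟩ := exists_hilbertBasis ℝ H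
  refine ⟨lp (fun _ : w => ℂ) 2, inferInstance, inferInstance, inferInstance, ⟨?_⟩⟩
  have hmem : ∀ x : H, Memℓp (fun i : w => ((b.repr x i : ℝ) : ℂ)) 2 := by
    intro x
    have h := lp.memℓp (b.repr x)
    rw [memℓp_gen_iff (by norm_num)] at h ⊢
    simpa using h
  refine ⟨⟨⟨fun x => ⟨fun i : w => ((b.repr x i : ℝ) : ℂ), hmem x⟩, ?_⟩, ?_⟩, ?_⟩
  · intro x y
    ext i
    change ((b.repr (x + y) i : ℝ) : ℂ) = ((b.repr x i : ℝ) : ℂ) + ((b.repr y i : ℝ) : ℂ)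
    simp
  · intro c x
    ext i
    change ((b.repr (c • x) i : ℝ) : ℂ) = (c : ℂ) • ((b.repr x i : ℝ) : ℂ)
    simp
  · intro x
    rw [← b.repr.norm_map x]
    rw [lp.norm_eq_tsum_rpow (by norm_num), lp.norm_eq_tsum_rpow (by norm_num)]
    simp

variable {n : ℕ} {H : Type*} [NormedAddCommGroup H] [InnerProductSpace ℝ H] [CompleteSpace H]
  {K : Type*} [NormedAddCommGroup K] [NormedSpace ℝ K] [CompleteSpace K]

lemma heat_comp (T : H →ₗᵢ[ℝ] K) (s : ℝ) (f : EuclideanSpace ℝ (Fin n) → H) :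
    heat s (fun y => T (f y)) = fun x => T (heat s f x) := by
  ext x
  simp only [heat]
  rw [← T.integral_comp_comm]
  simp

lemma heat_diff (s : ℝ) (f : EuclideanSpace ℝ (Fin n) → H) (hf : ContDiff ℝ (⊤ : ℕ∞) f)
    (hc : HasCompactSupport f) : Differentiable ℝ (heat s f) := by
  have hk : Continuous (heatKernel n s) := by
    unfold heatKernel; fun_prop
  have h := hc.contDiff_convolution_right (ContinuousLinearMap.lsmul ℝ ℝ) (n := (⊤ : ℕ∞))
    (μ := volume) hk.locallyIntegrable hf
  exact h.differentiable (by simp)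

lemma taylor1_comp (T : H →ₗᵢ[ℝ] K) (g : EuclideanSpace ℝ (Fin n) → H) (hg : Differentiable ℝ g)
    (x y : EuclideanSpace ℝ (Fin n)) :
    taylor1 (fun y => T (g y)) x y = T (taylor1 g x y) := by
  have h : fderiv ℝ (fun y => T (g y)) x = T.toContinuousLinearMap.comp (fderiv ℝ g x) :=
    (T.toContinuousLinearMap.hasFDerivAt.comp x (hg x).hasFDerivAt).fderiv
  simp [taylor1, h]

lemma dirDeriv_comp (T : H →ₗᵢ[ℝ] K) (g : EuclideanSpace ℝ (Fin n) → H) (hg : Differentiable ℝ g)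
    (z x : EuclideanSpace ℝ (Fin n)) :
    dirDeriv z (fun y => T (g y)) x = T (dirDeriv z g x) := by
  have h : fderiv ℝ (fun y => T (g y)) x = T.toContinuousLinearMap.comp (fderiv ℝ g x) :=
    (T.toContinuousLinearMap.hasFDerivAt.comp x (hg x).hasFDerivAt).fderiv
  simp [dirDeriv, h]

end reduction

/-- **Corollary (dimension-free Hilbertian Dorronsoro estimate for the heat semigroup).** -/
theorem statement19 :
    ∃ C : ℝ, 0 < C ∧
      ∀ (H : Type u) [NormedAddCommGroup H] [InnerProductSpace ℝ H] [CompleteSpace H],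
      ∀ (n : ℕ), 0 < n →
      ∀ f : EuclideanSpace ℝ (Fin n) → H, ContDiff ℝ (⊤ : ℕ∞) f → HasCompactSupport f →
        (∫⁻ x, ∫⁻ t in Set.Ioi (0 : ℝ),
            ((∫⁻ y in closedBall x t,
                (‖f y - taylor1 (heat (t ^ 2 / n) f) x y‖₊ : ℝ≥0∞) ^ (2 : ℝ))
              / volume (closedBall x t))
              / ENNReal.ofReal (t ^ 3)) ^ ((1 : ℝ) / 2)
          ≤ ENNReal.ofReal C *
              ((∫⁻ σ : sphere (0 : EuclideanSpace ℝ (Fin n)) 1,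
                  eLpNorm (dirDeriv (σ : EuclideanSpace ℝ (Fin n)) f) 2 volume ^ (2 : ℝ)
                  ∂((volume : Measure (EuclideanSpace ℝ (Fin n))).toSphere))
                / (volume : Measure (EuclideanSpace ℝ (Fin n))).toSphere Set.univ)
                ^ ((1 : ℝ) / 2) := by

  refine ⟨12, by norm_num, ?_⟩
  intro H _ _ _ n hn f hf hc
  obtain ⟨K, _, _, _, ⟨T⟩⟩ := exists_embed H
  have hfT : ContDiff ℝ (⊤ : ℕ∞) (fun y => T (f y)) := T.toContinuousLinearMap.contDiff.comp hf
  have hcT : HasCompactSupport (fun y => T (f y)) := hc.comp_left (g := T) (map_zero T)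
  have hd : Differentiable ℝ f := hf.differentiable (by simp)
  have h := core (hcT.toSchwartzMap hfT) hn
  have hcoe : (⇑(hcT.toSchwartzMap hfT)) = fun y => T (f y) := by
    ext y; simp
  rw [hcoe] at h
  have e1 : ∀ (t : ℝ) (x y : EuclideanSpace ℝ (Fin n)),
      ‖T (f y) - taylor1 (heat (t ^ 2 / n) (fun y => T (f y))) x y‖₊ =
        ‖f y - taylor1 (heat (t ^ 2 / n) f) x y‖₊ := by
    intro t x y
    rw [heat_comp, taylor1_comp T _ (heat_diff _ f hf hc), ← map_sub, T.nnnorm_map]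
  have e2 : ∀ σ : EuclideanSpace ℝ (Fin n),
      eLpNorm (dirDeriv σ (fun y => T (f y))) 2 volume = eLpNorm (dirDeriv σ f) 2 volume := by
    intro σ
    apply eLpNorm_congr_norm_ae
    refine Filter.Eventually.of_forall fun x => ?_
    rw [dirDeriv_comp T f hd, T.norm_map]
  simp only [e1, e2] at h
  exact h
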